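/- Let X₀ ∈ B(ℓ²(ℕ)) be a bounded operator with ⟨X₀e_1, e_1⟩ = 0 and let μ ∈ ℂ. Then μI + X₀ is a positive operator if and only if for every pair (β, T₀) — with T₀ a trace class operator satisfying ⟨T₀e_1, e_1⟩ = 0 and β ∈ ℂ such that the functional λI + K ↦ βλ + Σ_{(i,j)≠(1,1)} t_{i,j} k_{i,j} is positive on S₀ — one has μβ + Σ_{(i,j)≠(1,1)} x_{i,j} t_{i,j} ≥ 0, where x_{i,j} = ⟨X₀e_j, e_i⟩ and t_{i,j} = ⟨T₀e_j, e_i⟩. -/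

import Mathlib

noncomputable section

open scoped ComplexOrder InnerProductSpace

/-- The Hilbert space ℓ²(ℕ) of square-summable complex sequences. -/
abbrev Hs : Type := lp (fun _ : ℕ => ℂ) 2

/-- The standard orthonormal basis vectors of ℓ²(ℕ) (indexed from 0). -/
def e (i : ℕ) : Hs := lp.single 2 i 1

/-- The matrix unit `E i j : x ↦ ⟨x, e j⟩ e i`. -/
def E (i j : ℕ) : Hs →L[ℂ] Hs := (innerSL ℂ (e j)).smulRight (e i)

/-- `K₀`: the norm-closed linear span of the matrix units `E i j`, `(i,j) ≠ (0,0)`. -/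
def K0 : Submodule ℂ (Hs →L[ℂ] Hs) :=
  (Submodule.span ℂ {T | ∃ i j : ℕ, (i, j) ≠ (0, 0) ∧ T = E i j}).topologicalClosure

/-- The operator system `S₀` spanned by `K₀` and the identity operator. -/
def S0 : Submodule ℂ (Hs →L[ℂ] Hs) := Submodule.span ℂ {(1 : Hs →L[ℂ] Hs)} ⊔ K0

lemma one_mem_S0 : (1 : Hs →L[ℂ] Hs) ∈ S0 :=
  Submodule.mem_sup_left (Submodule.mem_span_singleton_self _)

/-- The matrix entry `X_{ij} = ⟨X e_j, e_i⟩` of a bounded operator on ℓ²(ℕ). -/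
def entry (X : Hs →L[ℂ] Hs) (i j : ℕ) : ℂ := ⟪e i, X (e j)⟫_ℂ

/-- `φ_{n+1}(X) = V_{n+1}* X V_{n+1}`, the upper-left (n+1)×(n+1) corner of `X`. -/
def phi (n : ℕ) (X : Hs →L[ℂ] Hs) : Matrix (Fin (n+1)) (Fin (n+1)) ℂ :=
  fun i j => entry X i j

/-- `Q_{n+1}`: the projection onto the orthocomplement of the span of `e 0, …, e n`. -/
def Qop (n : ℕ) : Hs →L[ℂ] Hs := 1 - ∑ i : Fin (n+1), E i i

/-- `ψ_{n+1}(Y) = V_{n+1} Y V_{n+1}* + y₀₀ Q_{n+1}`. -/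
def psi (n : ℕ) (Y : Matrix (Fin (n+1)) (Fin (n+1)) ℂ) : Hs →L[ℂ] Hs :=
  (∑ i : Fin (n+1), ∑ j : Fin (n+1), Y i j • E i j) + Y 0 0 • Qop n

/-- Positivity in the C*-algebra of m×m matrices over a star ring: `M = N* N`. -/
def MatPos {A : Type*} [Ring A] [StarRing A] {m : ℕ}
    (M : Matrix (Fin m) (Fin m) A) : Prop :=
  ∃ N : Matrix (Fin m) (Fin m) A, M = N.conjTranspose * N

/-- Complete positivity of a map between star rings: every matrix amplification
preserves positivity. -/
def IsCPfun {A B : Type*} [Ring A] [StarRing A] [Ring B] [StarRing B]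
    (θ : A → B) : Prop :=
  ∀ (m : ℕ) (M : Matrix (Fin m) (Fin m) A), MatPos M → MatPos (M.map θ)
set_option synthInstance.maxHeartbeats 1000000

/-- The absolute value `|T| = √(T*T)` of a bounded operator on ℓ²(ℕ). -/
def absOp (T : Hs →L[ℂ] Hs) : Hs →L[ℂ] Hs :=
  haveI : NonUnitalContinuousFunctionalCalculus ℝ (Hs →L[ℂ] Hs) IsSelfAdjoint :=
    IsSelfAdjoint.instNonUnitalContinuousFunctionalCalculus (A := Hs →L[ℂ] Hs)
  CFC.sqrt (star T * T)

/-- `T` is trace class: `T` is compact and `Σᵢ ⟨|T|eᵢ, eᵢ⟩ < ∞`. -/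
def TraceClass (T : Hs →L[ℂ] Hs) : Prop :=
  IsCompactOperator ⇑T ∧ Summable (fun i : ℕ => (⟪e i, absOp T (e i)⟫_ℂ).re)

/-- The trace `tr(T) = Σᵢ ⟨T eᵢ, eᵢ⟩` of a (trace class) operator. -/
def traceOp (T : Hs →L[ℂ] Hs) : ℂ := ∑' i : ℕ, entry T i i

/-!
Only finite matrices matter on either side of the duality.

If `μI + X₀` is positive then `μ ≥ 0`, because the corner entry of `X₀` vanishes. For the projection
`P` onto finitely many basis vectors, `μI + P X₀ P = μ(I - P) + P(μI + X₀)P` is then a positive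
element of `S₀`. The functional of a positive pair `(β, T₀)` is nonnegative on it, and its
values there are `μβ` plus the square partial sums of the double series.

Conversely, for a finite combination `x = ∑ aᵢ eᵢ`, the functional `λI + K ↦ ⟨(λI + K)x, x⟩` is
given by `β = ‖x‖²` and the finite matrix with entries `t_{ij} = conj aᵢ * aⱼ` off the corner. It is
positive, so the hypothesis says `⟨(μI + X₀)x, x⟩ ≥ 0`, and such `x` are dense.
-/

open Filter ContinuousLinearMap InnerProductSpace

section Series

variable {ι R : Type*} [AddCommMonoid R] [TopologicalSpace R] [ContinuousAdd R] [Preorder R]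
  [ClosedIciTopology R]

lemma nonneg_add_tsum_of_nonneg_add_sum_product {f : ι × ι → R} {a : R}
    (h : ∀ s : Finset ι, 0 ≤ a + ∑ p ∈ s ×ˢ s, f p) : 0 ≤ a + ∑' p, f p := by
  by_cases hf : Summable f
  · have hsquares : Tendsto (fun s : Finset ι => s ×ˢ s) atTop atTop :=
      tendsto_finsetProd_atTop.comp tendsto_atTop_diagonal
    exact ge_of_tendsto' ((hf.hasSum.comp hsquares).const_add a) h
  · simpa [tsum_eq_zero_of_not_summable hf] using h ∅

end Series

section Positivity

variable {𝕜 H : Type*} [RCLike 𝕜] [NormedAddCommGroup H] [InnerProductSpace 𝕜 H]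

lemma nonneg_of_isPositive_smul_one_add {X : H →L[𝕜] H} {μ : 𝕜}
    (hpos : (μ • (1 : H →L[𝕜] H) + X).IsPositive) {x : H} (hx : ‖x‖ = 1)
    (hXx : ⟪x, X x⟫_𝕜 = 0) : 0 ≤ μ := by
  simpa [inner_add_right, inner_smul_right, hXx, hx] using hpos.inner_nonneg_right x

lemma isPositive_smul_one_add_compression {X : H →L[𝕜] H} {μ : 𝕜} (hμ : 0 ≤ μ)
    (h : (μ • (1 : H →L[𝕜] H) + X).IsPositive) (U : Submodule 𝕜 H) [U.HasOrthogonalProjection] :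
    (μ • (1 : H →L[𝕜] H) + U.starProjection ∘L X ∘L U.starProjection).IsPositive := by
  have hsplit : μ • (1 : H →L[𝕜] H) + U.starProjection ∘L X ∘L U.starProjection =
      μ • (Uᗮ.starProjection ∘L 1 ∘L Uᗮ.starProjection) +
        U.starProjection ∘L (μ • (1 : H →L[𝕜] H) + X) ∘L U.starProjection := by
    ext x
    have hidem : U.starProjection (U.starProjection x) = U.starProjection x :=
      Submodule.starProjection_eq_self_iff.2 (U.starProjection_apply_mem x)
    simp only [Submodule.starProjection_orthogonal', add_apply, sub_apply, smul_apply, comp_apply,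
      one_apply_eq_self, map_add, map_sub, map_smul, hidem]
    module
  rw [hsplit]
  exact ((isPositive_one.conj_starProjection Uᗮ).smul_of_nonneg hμ).add (h.conj_starProjection U)

end Positivity

section ComplexHilbert

variable {H : Type*} [NormedAddCommGroup H] [InnerProductSpace ℂ H]

lemma isPositive_of_dense_inner_nonneg {T : H →L[ℂ] H} {s : Set H} (hs : Dense s)
    (h : ∀ x ∈ s, 0 ≤ ⟪x, T x⟫_ℂ) : T.IsPositive := by
  have hall : ∀ x, 0 ≤ ⟪x, T x⟫_ℂ :=
    hs.induction h (isClosed_le continuous_const (by fun_prop))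
  refine (isPositive_iff_complex T).2 fun x => ?_
  have hx : 0 ≤ ⟪T x, x⟫_ℂ := by simpa using star_nonneg_iff.2 (hall x)
  exact ⟨(Complex.eq_re_of_ofReal_le hx).symm, (RCLike.nonneg_iff.1 hx).1⟩

lemma norm_cfcAbs_apply [CompleteSpace H] (T : H →L[ℂ] H) (x : H) : ‖CFC.abs T x‖ = ‖T x‖ := by
  have hsymm : IsSelfAdjoint (CFC.abs T) := .of_nonneg (CFC.abs_nonneg T)
  have hinner : ⟪CFC.abs T x, CFC.abs T x⟫_ℂ = ⟪T x, T x⟫_ℂ :=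
    calc ⟪CFC.abs T x, CFC.abs T x⟫_ℂ
      _ = ⟪x, (CFC.abs T * CFC.abs T) x⟫_ℂ := hsymm.isSymmetric x (CFC.abs T x)
      _ = ⟪x, (star T * T) x⟫_ℂ := by rw [CFC.abs_mul_abs]
      _ = ⟪T x, T x⟫_ℂ := adjoint_inner_right T x (T x)
  rw [@norm_eq_sqrt_re_inner ℂ, @norm_eq_sqrt_re_inner ℂ, hinner]

end ComplexHilbert

section OffCorner

variable {𝕜 H ι : Type*} [RCLike 𝕜] [NormedAddCommGroup H] [InnerProductSpace 𝕜 H]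
  {v : ι → H} {o : ι}

/-- The operator `∑ c_{ij} |v i⟩⟨v j|`, the sum being over the finite set `s` of positions. -/
def finiteMatrix (v : ι → H) (s : Finset (ι × ι)) (c : ι × ι → 𝕜) : H →L[𝕜] H :=
  ∑ p ∈ s, c p • rankOne 𝕜 (v p.1) (v p.2)

variable (𝕜) in
/-- The span of the matrix units `|v i⟩⟨v j|` other than the corner `|v o⟩⟨v o|`. Its closure is
the operator space `K₀` when `v` is the standard basis of `ℓ²`. -/
def offCornerSpan (v : ι → H) (o : ι) : Submodule 𝕜 (H →L[𝕜] H) :=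
  Submodule.span 𝕜 {T | ∃ i j, (i, j) ≠ (o, o) ∧ T = rankOne 𝕜 (v i) (v j)}

/-- The pairing `∑_{(i,j) ≠ (o,o)} s_{ij} t_{ij}` of the matrices of two operators. It is `0` by
convention when the series is not absolutely summable, which can occur even if `S` is bounded and
`T` is trace class. -/
def offCornerPairing [DecidableEq ι] (v : ι → H) (o : ι) (S T : H →L[𝕜] H) : 𝕜 :=
  ∑' p : ι × ι, if p = (o, o) then 0 else ⟪v p.1, S (v p.2)⟫_𝕜 * ⟪v p.1, T (v p.2)⟫_𝕜

/-- Positivity of the functional `λ I + K ↦ β λ + ∑_{(i,j) ≠ (o,o)} t_{ij} k_{ij}` on the operator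
system spanned by the identity and the closure of `offCornerSpan`. -/
def IsPositiveOffCorner [DecidableEq ι] (v : ι → H) (o : ι) (β : 𝕜) (T : H →L[𝕜] H) : Prop :=
  ∀ (lam : 𝕜) (K : H →L[𝕜] H), K ∈ (offCornerSpan 𝕜 v o).topologicalClosure →
    (lam • (1 : H →L[𝕜] H) + K).IsPositive → 0 ≤ β * lam + offCornerPairing v o T K

lemma inner_finiteMatrix_apply [DecidableEq ι] (hv : Orthonormal 𝕜 v) (s : Finset (ι × ι))
    (c : ι × ι → 𝕜) (p : ι × ι) :
    ⟪v p.1, finiteMatrix v s c (v p.2)⟫_𝕜 = if p ∈ s then c p else 0 := by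
  have hunit (q : ι × ι) :
      ⟪v p.1, (c q • rankOne 𝕜 (v q.1) (v q.2)) (v p.2)⟫_𝕜 = if p = q then c q else 0 := by
    rw [smul_apply, inner_smul_right, inner_right_rankOne_apply, orthonormal_iff_ite.1 hv,
      orthonormal_iff_ite.1 hv, ite_zero_mul_ite_zero, mul_one, mul_ite_zero, mul_one]
    simp only [Prod.ext_iff, eq_comm]
  simp only [finiteMatrix, sum_apply, inner_sum, hunit, Finset.sum_ite_eq]

lemma finiteMatrix_mem_offCornerSpan {s : Finset (ι × ι)} (ho : (o, o) ∉ s) (c : ι × ι → 𝕜) :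
    finiteMatrix v s c ∈ offCornerSpan 𝕜 v o :=
  Submodule.sum_mem _ fun p hp => Submodule.smul_mem _ _ <|
    Submodule.subset_span ⟨p.1, p.2, fun h => ho (h ▸ hp), rfl⟩

lemma inner_apply_corner_eq_zero_of_mem_closure (hv : Orthonormal 𝕜 v) {K : H →L[𝕜] H}
    (hK : K ∈ (offCornerSpan 𝕜 v o).topologicalClosure) : ⟪v o, K (v o)⟫_𝕜 = 0 := by
  let cornerEntry : (H →L[𝕜] H) →L[𝕜] 𝕜 := innerSL 𝕜 (v o) ∘L ContinuousLinearMap.apply 𝕜 H (v o)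
  have hspan : offCornerSpan 𝕜 v o ≤ cornerEntry.ker := by
    classical
    refine Submodule.span_le.2 ?_
    rintro _ ⟨i, j, hij, rfl⟩
    change ⟪v o, rankOne 𝕜 (v i) (v j) (v o)⟫_𝕜 = 0
    rw [inner_right_rankOne_apply, orthonormal_iff_ite.1 hv, orthonormal_iff_ite.1 hv,
      ite_zero_mul_ite_zero, if_neg]
    rintro ⟨rfl, rfl⟩
    exact hij rfl
  exact Submodule.topologicalClosure_minimal _ hspan cornerEntry.isClosed_ker hK

lemma isCompactOperator_of_mem_offCornerSpan {T : H →L[𝕜] H} (hT : T ∈ offCornerSpan 𝕜 v o) :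
    IsCompactOperator ⇑T := by
  suffices hspan : offCornerSpan 𝕜 v o ≤ compactOperator (RingHom.id 𝕜) H H from hspan hT
  refine Submodule.span_le.2 ?_
  rintro _ ⟨i, j, -, rfl⟩
  have hfunctional : IsCompactOperator ⇑(innerSL 𝕜 (v j)) :=
    isCompactOperator_of_locallyCompactSpace_dom (innerSL 𝕜 (v j))
  exact hfunctional.clm_comp (toSpanSingleton 𝕜 (v i))

lemma finite_setOf_apply_ne_zero_of_mem_offCornerSpan (hv : Orthonormal 𝕜 v) {T : H →L[𝕜] H}
    (hT : T ∈ offCornerSpan 𝕜 v o) : {k | T (v k) ≠ 0}.Finite := by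
  induction hT using Submodule.span_induction with
  | mem T hT =>
    obtain ⟨i, j, -, rfl⟩ := hT
    refine (Set.finite_singleton j).subset fun k hk => ?_
    by_contra hkj
    exact hk (by simp [hv.2 (Ne.symm hkj)])
  | zero => simp
  | add S T _ _ hS hT =>
    refine (hS.union hT).subset fun k hk => ?_
    by_contra! hzero
    simp_all
  | smul c T _ hT => exact hT.subset fun k hk hzero => hk (by simp [hzero])

section Pairing

variable [DecidableEq ι]

lemma offCornerPairing_comm (S T : H →L[𝕜] H) :
    offCornerPairing v o S T = offCornerPairing v o T S := by
  simp only [offCornerPairing, mul_comm]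

lemma offCornerPairing_eq_tsum {S : H →L[𝕜] H} (hS : ⟪v o, S (v o)⟫_𝕜 = 0) (T : H →L[𝕜] H) :
    offCornerPairing v o S T = ∑' p : ι × ι, ⟪v p.1, S (v p.2)⟫_𝕜 * ⟪v p.1, T (v p.2)⟫_𝕜 := by
  refine tsum_congr fun p => ?_
  split_ifs with hp
  · simp [hp, hS]
  · rfl

lemma offCornerPairing_finiteMatrix (hv : Orthonormal 𝕜 v) {s : Finset (ι × ι)} (ho : (o, o) ∉ s)
    (S : H →L[𝕜] H) (c : ι × ι → 𝕜) :
    offCornerPairing v o S (finiteMatrix v s c) = ∑ p ∈ s, ⟪v p.1, S (v p.2)⟫_𝕜 * c p := by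
  have hcorner : ⟪v o, finiteMatrix v s c (v o)⟫_𝕜 = 0 := by
    simpa [ho] using inner_finiteMatrix_apply hv s c (o, o)
  rw [offCornerPairing_comm, offCornerPairing_eq_tsum hcorner]
  simp only [inner_finiteMatrix_apply hv]
  rw [tsum_eq_sum (s := s) fun p hp => by simp [hp]]
  exact Finset.sum_congr rfl fun p hp => by rw [if_pos hp, mul_comm]

end Pairing

open Classical in
lemma starProjection_span_image (hv : Orthonormal 𝕜 v) (s : Finset ι) :
    (Submodule.span 𝕜 (s.image v : Set H)).starProjection =
      ∑ i ∈ s, rankOne 𝕜 (v i) (v i) := by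
  rw [(OrthonormalBasis.span hv s).starProjection_eq_sum_rankOne]
  simp only [OrthonormalBasis.span_apply]
  exact Finset.sum_coe_sort s fun i => rankOne 𝕜 (v i) (v i)

open Classical in
lemma compression_span_image_eq_finiteMatrix (hv : Orthonormal 𝕜 v) (X : H →L[𝕜] H)
    (s : Finset ι) :
    (Submodule.span 𝕜 (s.image v : Set H)).starProjection ∘L X ∘L
        (Submodule.span 𝕜 (s.image v : Set H)).starProjection =
      finiteMatrix v (s ×ˢ s) fun p => ⟪v p.1, X (v p.2)⟫_𝕜 := by
  ext x
  simp only [starProjection_span_image hv, finiteMatrix, Finset.sum_product_right, comp_apply,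
    sum_apply, smul_apply, rankOne_apply, map_sum, map_smul, Finset.smul_sum, smul_smul, mul_comm]

lemma isPositive_smul_one_add_finiteMatrix [DecidableEq ι] (hv : Orthonormal 𝕜 v) {X : H →L[𝕜] H}
    (hX : ⟪v o, X (v o)⟫_𝕜 = 0) {μ : 𝕜} (hpos : (μ • (1 : H →L[𝕜] H) + X).IsPositive)
    (s : Finset ι) :
    (μ • (1 : H →L[𝕜] H) + finiteMatrix v ((s ×ˢ s).erase (o, o))
      fun p => ⟪v p.1, X (v p.2)⟫_𝕜).IsPositive := by
  classical
  have hμ := nonneg_of_isPositive_smul_one_add hpos (hv.1 o) hX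
  have hcompression := isPositive_smul_one_add_compression hμ hpos
    (Submodule.span 𝕜 (s.image v : Set H))
  rw [compression_span_image_eq_finiteMatrix hv] at hcompression
  rwa [finiteMatrix, Finset.sum_erase _ (by simp [hX])]

theorem nonneg_of_isPositive_of_isPositiveOffCorner [DecidableEq ι] (hv : Orthonormal 𝕜 v)
    {X : H →L[𝕜] H} (hX : ⟪v o, X (v o)⟫_𝕜 = 0) {μ : 𝕜}
    (hpos : (μ • (1 : H →L[𝕜] H) + X).IsPositive) {β : 𝕜} {T : H →L[𝕜] H}
    (hT : IsPositiveOffCorner v o β T) : 0 ≤ μ * β + offCornerPairing v o X T := by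
  rw [offCornerPairing_eq_tsum hX]
  refine nonneg_add_tsum_of_nonneg_add_sum_product fun s => ?_
  have ho : (o, o) ∉ (s ×ˢ s).erase (o, o) := Finset.notMem_erase _ _
  have hsection := hT μ _ (Submodule.le_topologicalClosure _ (finiteMatrix_mem_offCornerSpan ho _))
    (isPositive_smul_one_add_finiteMatrix hv hX hpos s)
  rw [offCornerPairing_finiteMatrix hv ho, Finset.sum_erase _ (by simp [hX])] at hsection
  simpa only [mul_comm] using hsection

section VectorStates

variable [DecidableEq ι]

/-- The matrix with entries `conj (a i) * a j`, `(i, j) ≠ (o, o)`. Pairing with it evaluates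
quadratic forms at `∑ a i • v i`; the conjugate sits on the row index because the pairing
multiplies entries without transposing. -/
def vectorDensity (v : ι → H) (o : ι) (a : ι →₀ 𝕜) : H →L[𝕜] H :=
  finiteMatrix v ((a.support ×ˢ a.support).erase (o, o)) fun p => star (a p.1) * a p.2

lemma vectorDensity_mem_offCornerSpan (a : ι →₀ 𝕜) :
    vectorDensity v o a ∈ offCornerSpan 𝕜 v o :=
  finiteMatrix_mem_offCornerSpan (Finset.notMem_erase _ _) _

lemma offCornerPairing_vectorDensity (hv : Orthonormal 𝕜 v) {K : H →L[𝕜] H}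
    (hK : ⟪v o, K (v o)⟫_𝕜 = 0) (a : ι →₀ 𝕜) :
    offCornerPairing v o K (vectorDensity v o a) =
      ⟪Finsupp.linearCombination 𝕜 v a, K (Finsupp.linearCombination 𝕜 v a)⟫_𝕜 := by
  rw [vectorDensity, offCornerPairing_finiteMatrix hv (Finset.notMem_erase _ _),
    Finset.sum_erase _ (by simp [hK]), Finset.sum_product_right]
  simp only [Finsupp.linearCombination_apply, Finsupp.sum, map_sum, map_smul, sum_inner, inner_sum,
    inner_smul_left, inner_smul_right, RCLike.star_def, Finset.mul_sum]
  exact Finset.sum_congr rfl fun i _ => Finset.sum_congr rfl fun j _ => by ring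

lemma inner_smul_one_add_linearCombination (hv : Orthonormal 𝕜 v) {K : H →L[𝕜] H}
    (hK : ⟪v o, K (v o)⟫_𝕜 = 0) (lam : 𝕜) (a : ι →₀ 𝕜) :
    ⟪Finsupp.linearCombination 𝕜 v a,
        (lam • (1 : H →L[𝕜] H) + K) (Finsupp.linearCombination 𝕜 v a)⟫_𝕜 =
      lam * ⟪Finsupp.linearCombination 𝕜 v a, Finsupp.linearCombination 𝕜 v a⟫_𝕜 +
        offCornerPairing v o K (vectorDensity v o a) := by
  rw [offCornerPairing_vectorDensity hv hK, add_apply, smul_apply, one_apply_eq_self,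
    inner_add_right, inner_smul_right]

lemma isPositiveOffCorner_vectorDensity (hv : Orthonormal 𝕜 v) (a : ι →₀ 𝕜) :
    IsPositiveOffCorner v o
      ⟪Finsupp.linearCombination 𝕜 v a, Finsupp.linearCombination 𝕜 v a⟫_𝕜
      (vectorDensity v o a) := by
  intro lam K hK hpos
  rw [mul_comm, offCornerPairing_comm, ← inner_smul_one_add_linearCombination hv
    (inner_apply_corner_eq_zero_of_mem_closure hv hK)]
  exact hpos.inner_nonneg_right _

end VectorStates

end OffCorner

section General

variable {H ι : Type*} [NormedAddCommGroup H] [InnerProductSpace ℂ H] [DecidableEq ι]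
  {v : ι → H} {o : ι}

theorem isPositive_of_forall_offCornerSpan (hv : Orthonormal ℂ v)
    (hdense : Dense (Submodule.span ℂ (Set.range v) : Set H)) {X : H →L[ℂ] H}
    (hX : ⟪v o, X (v o)⟫_ℂ = 0) {μ : ℂ}
    (h : ∀ (β : ℂ), ∀ T ∈ offCornerSpan ℂ v o, IsPositiveOffCorner v o β T →
      0 ≤ μ * β + offCornerPairing v o X T) :
    (μ • (1 : H →L[ℂ] H) + X).IsPositive := by
  refine isPositive_of_dense_inner_nonneg hdense fun x hx => ?_
  obtain ⟨a, rfl⟩ := Finsupp.mem_span_range_iff_exists_finsupp.1 hx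
  rw [← Finsupp.linearCombination_apply, inner_smul_one_add_linearCombination hv hX]
  exact h _ _ (vectorDensity_mem_offCornerSpan a) (isPositiveOffCorner_vectorDensity hv a)

theorem stmt_9_general (hv : Orthonormal ℂ v)
    (hdense : Dense (Submodule.span ℂ (Set.range v) : Set H)) {𝒯 : Set (H →L[ℂ] H)}
    (h𝒯 : (offCornerSpan ℂ v o : Set (H →L[ℂ] H)) ⊆ 𝒯) {X : H →L[ℂ] H}
    (hX : ⟪v o, X (v o)⟫_ℂ = 0) (μ : ℂ) :
    (μ • (1 : H →L[ℂ] H) + X).IsPositive ↔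
      ∀ (β : ℂ), ∀ T ∈ 𝒯, IsPositiveOffCorner v o β T → 0 ≤ μ * β + offCornerPairing v o X T :=
  ⟨fun hpos _ _ _ hT => nonneg_of_isPositive_of_isPositiveOffCorner hv hX hpos hT,
    fun h => isPositive_of_forall_offCornerSpan hv hdense hX fun β T hT => h β T (h𝒯 hT)⟩

end General

section StandardBasis

lemma coe_hilbertBasis_ofRepr_refl :
    ⇑(HilbertBasis.ofRepr (LinearIsometryEquiv.refl ℂ Hs)) = e := by
  funext i
  rw [← HilbertBasis.repr_symm_single]
  rfl

lemma orthonormal_e : Orthonormal ℂ e :=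
  coe_hilbertBasis_ofRepr_refl ▸ HilbertBasis.orthonormal _

lemma dense_span_range_e : Dense (Submodule.span ℂ (Set.range e) : Set Hs) := by
  rw [← coe_hilbertBasis_ofRepr_refl, Submodule.dense_iff_topologicalClosure_eq_top]
  exact HilbertBasis.dense_span _

lemma traceClass_of_finite_support {T : Hs →L[ℂ] Hs} (hcompact : IsCompactOperator ⇑T)
    (hsupport : {i | T (e i) ≠ 0}.Finite) : TraceClass T := by
  refine ⟨hcompact, summable_of_hasFiniteSupport (hsupport.subset fun i hi hTi => hi ?_)⟩
  have habs : absOp T (e i) = 0 := by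
    rw [← norm_eq_zero]
    exact (norm_cfcAbs_apply T (e i)).trans (by rw [hTi, norm_zero])
  simp only [habs, inner_zero_right, Complex.zero_re]

lemma offCornerSpan_e_subset_traceClass :
    (offCornerSpan ℂ e 0 : Set (Hs →L[ℂ] Hs)) ⊆ {T | TraceClass T ∧ entry T 0 0 = 0} :=
  fun _ hT =>
    ⟨traceClass_of_finite_support (isCompactOperator_of_mem_offCornerSpan hT)
      (finite_setOf_apply_ne_zero_of_mem_offCornerSpan orthonormal_e hT),
    inner_apply_corner_eq_zero_of_mem_closure orthonormal_e (Submodule.le_topologicalClosure _ hT)⟩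

end StandardBasis

/-- let `X₀ ∈ B(ℓ²(ℕ))` have vanishing (0,0) entry and `μ ∈ ℂ`. Then
`μI + X₀` is a positive operator iff for every pair `(β, T₀)` — `T₀` trace class with
vanishing (0,0) entry and `β ∈ ℂ` such that `λI + K ↦ βλ + Σ_{(i,j)≠(0,0)} t_{ij} k_{ij}`
is a positive functional on `S₀` — one has `μβ + Σ_{(i,j)≠(0,0)} x_{ij} t_{ij} ≥ 0`. -/
theorem stmt_9 (X₀ : Hs →L[ℂ] Hs) (hX : entry X₀ 0 0 = 0) (μ : ℂ) :
    (μ • (1 : Hs →L[ℂ] Hs) + X₀).IsPositive ↔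
      ∀ (β : ℂ) (T₀ : Hs →L[ℂ] Hs), TraceClass T₀ → entry T₀ 0 0 = 0 →
        (∀ (lam : ℂ) (K : Hs →L[ℂ] Hs), K ∈ K0 →
          (lam • (1 : Hs →L[ℂ] Hs) + K).IsPositive →
          0 ≤ β * lam + ∑' p : ℕ × ℕ,
            (if p = (0, 0) then 0 else entry T₀ p.1 p.2 * entry K p.1 p.2)) →
        0 ≤ μ * β + ∑' p : ℕ × ℕ,
          (if p = (0, 0) then 0 else entry X₀ p.1 p.2 * entry T₀ p.1 p.2) := by
  have hgeneral := stmt_9_general orthonormal_e dense_span_range_e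
    offCornerSpan_e_subset_traceClass hX μ
  exact ⟨fun hpos β T hT hT₀ => hgeneral.1 hpos β T ⟨hT, hT₀⟩,
    fun h => hgeneral.2 fun β T hT => h β T hT.1 hT.2⟩
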